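/- Let m, n be positive integers and A ∈ M_{n,m}(𝔽_q((z⁻¹))) be non-degenerate. Then for every integer l ≥ 2, the set Bad^ε(A) with ε = q^{−(2l+2)−m/n} has Hausdorff dimension at least n − 1/l. In particular, there is a continuous function f : ℝ₊ → ℝ₊ with f(0) = 0 such that dim_H Bad^ε(A) ≥ n − f(ε) for every 0 < ε ≤ q^{−m/n−6}. -/

import Mathlib

/-!
Common setup: the field `𝔽_q((z⁻¹))` of formal power series over a finite field `K` of
cardinality `q`, modeled as the field `FF K` of formal Laurent series in `t = z⁻¹`,
together with its non-Archimedean norm, the embedding of the polynomial ring `𝔽_q[z]`,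
distances to polynomial (vectors), Diophantine exponents, `Bad` sets, continued fractions
and best approximation sequences.
-/

open scoped Classical ENNReal NNReal
open Filter

noncomputable section

namespace FPSDA

variable (K : Type*) [Field K] [Fintype K]

/-- The field `𝔽_q((z⁻¹))` of formal power series in `z⁻¹` over the finite field `K = 𝔽_q`,
modeled as the field of formal Laurent series in the variable `t = z⁻¹`. -/
def FF : Type _ := LaurentSeries K

instance : Field (FF K) := inferInstanceAs (Field (LaurentSeries K))

variable {K}

/-- The identity map, viewing an element of `𝔽_q((z⁻¹))` as a Laurent series in `t = z⁻¹`. -/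
def toL (x : FF K) : LaurentSeries K := x

@[simp] lemma toL_zero : toL (0 : FF K) = 0 := rfl
@[simp] lemma toL_add (x y : FF K) : toL (x + y) = toL x + toL y := rfl
@[simp] lemma toL_neg (x : FF K) : toL (-x) = -toL x := rfl
@[simp] lemma toL_sub (x y : FF K) : toL (x - y) = toL x - toL y := rfl
lemma toL_eq_zero {x : FF K} : toL x = 0 ↔ x = 0 := Iff.rfl

/-- The norm `‖x‖ = q ^ (deg x)` on `𝔽_q((z⁻¹))`, where
`deg x = - (order of x as a Laurent series in z⁻¹)`; `‖0‖ = 0`. -/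
def fnorm (x : FF K) : ℝ :=
  if toL x = 0 then 0 else (Fintype.card K : ℝ) ^ (-(toL x).order)

lemma one_le_q : (1 : ℝ) ≤ (Fintype.card K : ℝ) := by
  exact_mod_cast Fintype.card_pos

lemma fnorm_nonneg (x : FF K) : 0 ≤ fnorm x := by
  unfold fnorm
  split_ifs
  · exact le_refl 0
  · exact zpow_nonneg (by positivity) _

lemma fnorm_eq_zero {x : FF K} : fnorm x = 0 ↔ x = 0 := by
  unfold fnorm
  split_ifs with h
  · exact ⟨fun _ => toL_eq_zero.mp h, fun _ => rfl⟩
  · constructor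
    · intro hc
      exact absurd hc (zpow_ne_zero _ (by
        have h0 : (0:ℝ) < (Fintype.card K : ℝ) := by positivity
        exact ne_of_gt h0))
    · intro hc
      exact absurd (toL_eq_zero.mpr hc) h

lemma fnorm_neg (x : FF K) : fnorm (-x) = fnorm x := by
  unfold fnorm
  rw [toL_neg]
  simp [neg_eq_zero, HahnSeries.order_neg]

lemma fnorm_add_le (x y : FF K) : fnorm (x + y) ≤ max (fnorm x) (fnorm y) := by
  by_cases hxy : x + y = 0
  · rw [fnorm_eq_zero.mpr hxy]
    exact le_max_of_le_left (fnorm_nonneg x)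
  by_cases hx : x = 0
  · rw [hx, zero_add]
    exact le_max_right _ _
  by_cases hy : y = 0
  · rw [hy, add_zero]
    exact le_max_left _ _
  have horder : min (toL x).order (toL y).order ≤ (toL (x + y)).order := by
    rw [toL_add]
    exact HahnSeries.min_order_le_order_add (show toL x + toL y ≠ 0 from hxy)
  have h1 : fnorm (x + y) = (Fintype.card K : ℝ) ^ (-(toL (x+y)).order) := by
    unfold fnorm
    rw [if_neg (show toL (x + y) ≠ 0 from hxy)]
  rcases le_total (toL x).order (toL y).order with h | h
  · have h2 : (toL x).order ≤ (toL (x+y)).order := le_trans (by simp [min_eq_left h]) horder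
    refine le_max_of_le_left ?_
    rw [h1]
    unfold fnorm
    rw [if_neg (show toL x ≠ 0 from hx)]
    exact zpow_le_zpow_right₀ one_le_q (by omega)
  · have h2 : (toL y).order ≤ (toL (x+y)).order := le_trans (by simp [min_eq_right h]) horder
    refine le_max_of_le_right ?_
    rw [h1]
    unfold fnorm
    rw [if_neg (show toL y ≠ 0 from hy)]
    exact zpow_le_zpow_right₀ one_le_q (by omega)

/-- The (ultra)metric `dist x y = ‖x - y‖` on `𝔽_q((z⁻¹))`. -/
instance : MetricSpace (FF K) where
  dist x y := fnorm (x - y)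
  dist_self x := by
    show fnorm (x - x) = 0
    rw [sub_self]
    exact fnorm_eq_zero.mpr rfl
  dist_comm x y := by
    show fnorm (x - y) = fnorm (y - x)
    have h : x - y = -(y - x) := by ring
    rw [h, fnorm_neg]
  dist_triangle x y z := by
    show fnorm (x - z) ≤ fnorm (x - y) + fnorm (y - z)
    have h : x - z = (x - y) + (y - z) := by ring
    calc fnorm (x - z) ≤ max (fnorm (x - y)) (fnorm (y - z)) := by
          rw [h]; exact fnorm_add_le _ _
      _ ≤ fnorm (x - y) + fnorm (y - z) :=
        max_le (le_add_of_nonneg_right (fnorm_nonneg _)) (le_add_of_nonneg_left (fnorm_nonneg _))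
  eq_of_dist_eq_zero := by
    intro x y h
    have h' : x - y = 0 := fnorm_eq_zero.mp h
    exact sub_eq_zero.mp h'

instance : MeasurableSpace (FF K) := borel _
instance : BorelSpace (FF K) := ⟨rfl⟩

/-- The canonical embedding of the polynomial ring `𝔽_q[z]` into `𝔽_q((z⁻¹))`:
the variable `z` is sent to `t⁻¹ = single (-1) 1`. -/
def polyF (P : Polynomial K) : FF K :=
  Polynomial.aeval (HahnSeries.single (-1 : ℤ) (1 : K)) P

/-- Supremum norm of a vector with entries in `𝔽_q((z⁻¹))`. -/
def vnorm {ι : Type*} [Fintype ι] (v : ι → FF K) : ℝ := ⨆ i, fnorm (v i)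

/-- `⟨v⟩`, the distance from the vector `v` to the nearest polynomial vector. -/
def vdist {ι : Type*} [Fintype ι] (v : ι → FF K) : ℝ :=
  ⨅ y : ι → Polynomial K, vnorm (fun i => v i - polyF (y i))

/-- `⟨x⟩`, the distance from the scalar `x` to the nearest polynomial. -/
def sdist (x : FF K) : ℝ := ⨅ y : Polynomial K, fnorm (x - polyF y)

/-- The fractional part `{x} = Σ_{i ≥ 1} a_i z^{-i}` of `x = Σ_i a_i z^{-i}`. -/
def fracPart (x : FF K) : FF K :=
  (⟨fun i => if 1 ≤ i then (toL x).coeff i else 0, (toL x).isPWO_support'.mono (by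
      intro i hi
      by_cases h : (1:ℤ) ≤ i
      · simpa [Function.mem_support, h] using hi
      · simp [Function.mem_support, h] at hi)⟩ : LaurentSeries K)

/-- The integer part `[x] = Σ_{i ≤ 0} a_i z^{-i}` of `x = Σ_i a_i z^{-i}`, as a polynomial
in `z`. -/
def intPoly (x : FF K) : Polynomial K :=
  ∑ i ∈ Finset.range ((-(toL x).order).toNat + 1),
    Polynomial.monomial i ((toL x).coeff (-(i : ℤ)))

/-- `x ∈ 𝔽_q((z⁻¹))` is irrational if it is not in `𝔽_q(z)`, i.e. is not a ratio of two
polynomials in `z`. -/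
def FIrrational (x : FF K) : Prop :=
  ∀ P Q : Polynomial K, Q ≠ 0 → x * polyF Q ≠ polyF P

section Exponents

variable {m n : ℕ}

/-- The norm `‖x‖ = max_j ‖x_j‖` of a polynomial vector `x`. -/
def pnorm {ι : Type*} [Fintype ι] (x : ι → Polynomial K) : ℝ :=
  vnorm (fun i => (polyF (x i) : FF K))

/-- The system `⟨A x - θ⟩ ≤ H^{-ω}`, `‖x‖ ≤ H` has a polynomial solution `x`. -/
def Solv (A : Matrix (Fin n) (Fin m) (FF K)) (θ : Fin n → FF K) (ω H : ℝ) : Prop :=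
  ∃ x : Fin m → Polynomial K,
    vdist (A.mulVec (fun j => polyF (x j)) - θ) ≤ H ^ (-ω) ∧ pnorm x ≤ H

/-- The system `⟨A x⟩ ≤ H^{-ω}`, `‖x‖ ≤ H` has a nonzero polynomial solution `x`. -/
def SolvHom (A : Matrix (Fin n) (Fin m) (FF K)) (ω H : ℝ) : Prop :=
  ∃ x : Fin m → Polynomial K, x ≠ 0 ∧
    vdist (A.mulVec (fun j => polyF (x j))) ≤ H ^ (-ω) ∧ pnorm x ≤ H

/-- The inhomogeneous exponent `ω(A, θ)`: the supremum (in `[0,∞]`) of all `ω` such that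
for arbitrarily large `H` the system `⟨A x - θ⟩ ≤ H^{-ω}`, `‖x‖ ≤ H` has a polynomial
solution. -/
def omegaInhom (A : Matrix (Fin n) (Fin m) (FF K)) (θ : Fin n → FF K) : ℝ≥0∞ :=
  ⨆ (ω : ℝ) (_ : ∀ H₀ : ℝ, ∃ H : ℝ, H₀ ≤ H ∧ Solv A θ ω H), ENNReal.ofReal ω

/-- The uniform inhomogeneous exponent `ω̂(A, θ)`: as `ω(A, θ)`, but with a solution for
all sufficiently large `H`. -/
def omegaHatInhom (A : Matrix (Fin n) (Fin m) (FF K)) (θ : Fin n → FF K) : ℝ≥0∞ :=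
  ⨆ (ω : ℝ) (_ : ∃ H₀ : ℝ, ∀ H : ℝ, H₀ ≤ H → Solv A θ ω H), ENNReal.ofReal ω

/-- The homogeneous exponent `ω(A)`. -/
def omegaHom (A : Matrix (Fin n) (Fin m) (FF K)) : ℝ≥0∞ :=
  ⨆ (ω : ℝ) (_ : ∀ H₀ : ℝ, ∃ H : ℝ, H₀ ≤ H ∧ SolvHom A ω H), ENNReal.ofReal ω

/-- The uniform homogeneous exponent `ω̂(A)`. -/
def omegaHatHom (A : Matrix (Fin n) (Fin m) (FF K)) : ℝ≥0∞ :=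
  ⨆ (ω : ℝ) (_ : ∃ H₀ : ℝ, ∀ H : ℝ, H₀ ≤ H → SolvHom A ω H), ENNReal.ofReal ω

/-- `A` is non-degenerate: the `𝔽_q[z]`-module `Aᵀ 𝔽_q[z]ⁿ + 𝔽_q[z]^m ⊆ 𝔽_q((z⁻¹))^m` has
rank `m + n` over `𝔽_q[z]`, i.e. its `m + n` natural generators are linearly independent
over `𝔽_q[z]`; equivalently, no nonzero polynomial vector `u` makes `Aᵀ u` a polynomial
vector. -/
def Nondegenerate (A : Matrix (Fin n) (Fin m) (FF K)) : Prop :=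
  ∀ u : Fin n → Polynomial K,
    (∃ v : Fin m → Polynomial K,
      A.transpose.mulVec (fun i => polyF (u i)) = fun j => polyF (v j)) → u = 0

/-- `liminf_{x ∈ 𝔽_q[z]^m, ‖x‖ → ∞} ‖x‖^{m/n} ⟨A x - θ⟩`, computed in `[0, ∞]`. -/
def badLiminf (A : Matrix (Fin n) (Fin m) (FF K)) (θ : Fin n → FF K) : ℝ≥0∞ :=
  Filter.liminf
    (fun x : Fin m → Polynomial K =>
      ENNReal.ofReal ((pnorm x) ^ ((m : ℝ) / (n : ℝ)) *
        vdist (A.mulVec (fun j => polyF (x j)) - θ)))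
    (Filter.comap (fun x : Fin m → Polynomial K => pnorm x) Filter.atTop)

/-- The set `Bad^ε(A)` of `θ` in the unit polydisc `𝕀ⁿ` with
`liminf_{‖x‖ → ∞} ‖x‖^{m/n} ⟨A x - θ⟩ ≥ ε`. -/
def Bad (A : Matrix (Fin n) (Fin m) (FF K)) (ε : ℝ) : Set (Fin n → FF K) :=
  {θ | (∀ i, fnorm (θ i) < 1) ∧ ENNReal.ofReal ε ≤ badLiminf A θ}

/-- The set `Bad(A) = ⋃_{ε > 0} Bad^ε(A)`. -/
def BadAll (A : Matrix (Fin n) (Fin m) (FF K)) : Set (Fin n → FF K) :=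
  ⋃ (ε : ℝ) (_ : 0 < ε), Bad A ε

/-- `M(y) = ⟨Aᵀ y⟩` for a polynomial vector `y`. -/
def Mfun (A : Matrix (Fin n) (Fin m) (FF K)) (y : Fin n → Polynomial K) : ℝ :=
  vdist (A.transpose.mulVec (fun i => polyF (y i)))

/-- `y 1, y 2, …` is a sequence of best approximations related to `Aᵀ`:
`1 = Y_1 < Y_2 < ⋯`, `M_1 > M_2 > ⋯`, and `M(x) ≥ M_k` for every nonzero polynomial
vector `x` with `‖x‖ < Y_{k+1}` (the value `y 0` is irrelevant). -/
def IsBestApproxSeq (A : Matrix (Fin n) (Fin m) (FF K))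
    (y : ℕ → Fin n → Polynomial K) : Prop :=
  pnorm (y 1) = 1 ∧
  (∀ k, 1 ≤ k → pnorm (y k) < pnorm (y (k + 1))) ∧
  (∀ k, 1 ≤ k → Mfun A (y (k + 1)) < Mfun A (y k)) ∧
  (∀ k, 1 ≤ k → ∀ x : Fin n → Polynomial K, x ≠ 0 → pnorm x < pnorm (y (k + 1)) →
    Mfun A (y k) ≤ Mfun A x)

end Exponents

section Scalar

/-- The system `⟨ξ x - θ⟩ ≤ H^{-ω}`, `‖x‖ ≤ H` has a polynomial solution `x`. -/
def sSolv (ξ θ : FF K) (ω H : ℝ) : Prop :=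
  ∃ x : Polynomial K, sdist (ξ * polyF x - θ) ≤ H ^ (-ω) ∧ fnorm (polyF x) ≤ H

/-- The scalar inhomogeneous exponent `ω((ξ), θ)`. -/
def somegaInhom (ξ θ : FF K) : ℝ≥0∞ :=
  ⨆ (ω : ℝ) (_ : ∀ H₀ : ℝ, ∃ H : ℝ, H₀ ≤ H ∧ sSolv ξ θ ω H), ENNReal.ofReal ω

/-- The scalar uniform inhomogeneous exponent `ω̂((ξ), θ)`. -/
def somegaHatInhom (ξ θ : FF K) : ℝ≥0∞ :=
  ⨆ (ω : ℝ) (_ : ∃ H₀ : ℝ, ∀ H : ℝ, H₀ ≤ H → sSolv ξ θ ω H), ENNReal.ofReal ω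

/-- The scalar homogeneous exponent `ω((ξ))`. -/
def somegaHom (ξ : FF K) : ℝ≥0∞ :=
  ⨆ (ω : ℝ) (_ : ∀ H₀ : ℝ, ∃ H : ℝ, H₀ ≤ H ∧ ∃ x : Polynomial K, x ≠ 0 ∧
      sdist (ξ * polyF x) ≤ H ^ (-ω) ∧ fnorm (polyF x) ≤ H), ENNReal.ofReal ω

/-- `liminf_{x ∈ 𝔽_q[z], ‖x‖ → ∞} ‖x‖ ⟨α x - θ⟩`, computed in `[0, ∞]`. -/
def sBadLiminf (α θ : FF K) : ℝ≥0∞ :=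
  Filter.liminf
    (fun x : Polynomial K => ENNReal.ofReal (fnorm (polyF x) * sdist (α * polyF x - θ)))
    (Filter.comap (fun x : Polynomial K => fnorm (polyF x)) Filter.atTop)

/-- The set `Bad^ε(α)` of `θ ∈ 𝕀` with `liminf_{‖x‖ → ∞} ‖x‖ ⟨α x - θ⟩ ≥ ε`. -/
def sBad (α : FF K) (ε : ℝ) : Set (FF K) :=
  {θ | fnorm θ < 1 ∧ ENNReal.ofReal ε ≤ sBadLiminf α θ}

end Scalar

section CF

/-- The Gauss map `T x = 1/x - [1/x]` on `𝔽_q((z⁻¹))`. -/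
def gaussMap (x : FF K) : FF K := fracPart x⁻¹

/-- `pquot α k` is the `(k+1)`-st partial quotient `A_{k+1} = [1 / T^k α]` of the
continued fraction expansion of `α`. -/
def pquot (α : FF K) (k : ℕ) : Polynomial K := intPoly ((gaussMap^[k] α)⁻¹)

/-- `cfQ α k` is the denominator `Q_k` of the `k`-th convergent of the continued fraction
expansion of `α`: `Q_0 = 1`, `Q_1 = A_1`, `Q_{k+2} = A_{k+2} Q_{k+1} + Q_k`. -/
def cfQ (α : FF K) : ℕ → Polynomial K
  | 0 => 1
  | 1 => pquot α 0
  | (k + 2) => pquot α (k + 1) * cfQ α (k + 1) + cfQ α k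

/-- `α` is singular on average: for every `c > 0` the proportion of `l ∈ {1, …, N}` for
which `‖{Q α}‖ ≤ c 2^{-l}` has a solution `Q ∈ 𝔽_q[z]` with `0 < ‖Q‖ ≤ 2^l` tends to `1`
as `N → ∞`. -/
def SingularOnAverage (α : FF K) : Prop :=
  ∀ c : ℝ, 0 < c →
    Filter.Tendsto
      (fun N : ℕ =>
        (((Finset.Icc 1 N).filter (fun l : ℕ =>
            ∃ Q : Polynomial K, Q ≠ 0 ∧ fnorm (polyF Q) ≤ 2 ^ l ∧
              fnorm (fracPart (polyF Q * α)) ≤ c / 2 ^ l)).card : ℝ) / (N : ℝ))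
      Filter.atTop (nhds 1)

end CF

end FPSDA

open FPSDA MeasureTheory

/-!
The residue of a Laurent series is its coefficient at `z⁻¹`. If `y ∈ 𝔽_q[z]ⁿ` has `⟨Aᵀ y⟩` small
compared with `‖x‖⁻¹`, the residue of `y · A x` vanishes, so a nonzero residue of
`y · θ` forces `⟨A x - θ⟩ ≥ (q ‖y‖)⁻¹`. Dirichlet's theorem supplies such a `y` of controlled degree
for every `x`. Hence `θ` is badly approximable once its residue against each minimal vector of
degree `< (k + 1) l` is nonzero, and one vector `y` for each block of `l` consecutive degrees is
enough.

Enumerate the digits of all coordinates of `θ` in a single sequence. The residue of `y · θ` is then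
a linear form in the digits whose last nonzero coefficient lies in a window of length `n l`, and the
windows of different vectors are disjoint. The linear system prescribing all these residues is
triangular: the remaining digits can be chosen freely, at most one digit out of every `n l` being
determined. A set with that much freedom has dimension at least `n - 1 / l`, because its free digits
are the base-`q` digits of a Hölder map of exponent `n - 1 / l` onto `[0, 1]`.
-/

namespace FPSDA

section Coeff

variable {K : Type*} [Field K]

/-- The additive map extracting the coefficient of `z⁻ⁱ`. -/
def coeff (i : ℤ) : FF K →+ K where
  toFun x := (toL x).coeff i
  map_zero' := rfl
  map_add' _ _ := rfl

/-- `polyF`, bundled as a ring homomorphism. -/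
def polyRingHom : Polynomial K →+* FF K :=
  (Polynomial.aeval (HahnSeries.single (-1 : ℤ) (1 : K))).toRingHom

lemma polyRingHom_apply (P : Polynomial K) : polyRingHom P = polyF P :=
  rfl

lemma toL_polyF_monomial (a : ℕ) (c : K) :
    toL (polyF (Polynomial.monomial a c)) = HahnSeries.single (-(a : ℤ)) c := by
  have halg : algebraMap K (LaurentSeries K) c = HahnSeries.C c := by
    rw [HahnSeries.algebraMap_apply', PowerSeries.algebraMap_apply, HahnSeries.ofPowerSeries_C]
    rfl
  rw [toL, polyF, Polynomial.aeval_monomial, HahnSeries.single_pow, halg, HahnSeries.C_apply,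
    HahnSeries.single_mul_single, zero_add, one_pow, mul_one, nsmul_eq_mul, mul_neg_one]

lemma coeff_polyF (P : Polynomial K) (i : ℤ) :
    coeff i (polyF P) = if i ≤ 0 then P.coeff (-i).toNat else 0 := by
  induction P using Polynomial.induction_on' with
  | add P Q hP hQ =>
    rw [← polyRingHom_apply, map_add, map_add, polyRingHom_apply, polyRingHom_apply, hP, hQ,
      Polynomial.coeff_add]
    split_ifs <;> simp only [add_zero]
  | monomial a c =>
    change (toL (polyF (Polynomial.monomial a c))).coeff i = _
    rw [toL_polyF_monomial, HahnSeries.coeff_single, Polynomial.coeff_monomial]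
    grind

lemma coeff_polyF_mul (P : Polynomial K) (x : FF K) (i : ℤ) :
    coeff i (polyF P * x) = P.sum fun a c => c * coeff (i + a) x := by
  induction P using Polynomial.induction_on' with
  | add P Q hP hQ =>
    rw [← polyRingHom_apply, map_add, add_mul, map_add, polyRingHom_apply, polyRingHom_apply,
      hP, hQ, Polynomial.sum_add_index _ _ _ (fun _ => zero_mul _) fun _ _ _ => add_mul _ _ _]
  | monomial a c =>
    change (toL (polyF (Polynomial.monomial a c)) * toL x).coeff i = _
    rw [toL_polyF_monomial, HahnSeries.coeff_single_mul, sub_neg_eq_add]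
    exact (Polynomial.sum_monomial_index c (fun b d => d * coeff (i + b) x) (zero_mul _)).symm

lemma coeff_polyF_intPoly (x : FF K) {i : ℤ} (hi : i ≤ 0) :
    coeff i (polyF (intPoly x)) = coeff i x := by
  rw [coeff_polyF, if_pos hi, intPoly, Polynomial.finsetSum_coeff]
  simp only [Polynomial.coeff_monomial, Finset.sum_ite_eq', Finset.mem_range]
  split_ifs with hmem
  · rw [Int.toNat_of_nonneg (by lia), neg_neg]
    rfl
  · exact (HahnSeries.coeff_eq_zero_of_lt_order (by lia)).symm

end Coeff

section Norm

variable {K : Type*} [Field K] [Fintype K]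

lemma one_lt_q : (1 : ℝ) < Fintype.card K := by
  exact_mod_cast Fintype.one_lt_card

lemma q_pos : (0 : ℝ) < Fintype.card K :=
  zero_lt_one.trans one_lt_q

lemma fnorm_of_ne_zero {x : FF K} (hx : x ≠ 0) :
    fnorm x = (Fintype.card K : ℝ) ^ (-(toL x).order) :=
  if_neg hx

lemma fnorm_zero : fnorm (0 : FF K) = 0 :=
  fnorm_eq_zero.2 rfl

lemma fnorm_mul (x y : FF K) : fnorm (x * y) = fnorm x * fnorm y := by
  rcases eq_or_ne x 0 with rfl | hx
  · simp only [zero_mul, fnorm_zero]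
  rcases eq_or_ne y 0 with rfl | hy
  · simp only [mul_zero, fnorm_zero]
  have horder : (toL (x * y)).order = (toL x).order + (toL y).order :=
    HahnSeries.order_mul (x := toL x) (y := toL y) hx hy
  rw [fnorm_of_ne_zero hx, fnorm_of_ne_zero hy, fnorm_of_ne_zero (mul_ne_zero hx hy), horder,
    neg_add, zpow_add₀ q_pos.ne']

lemma fnorm_lt_zpow_add_one_iff {x : FF K} {N : ℤ} :
    fnorm x < (Fintype.card K : ℝ) ^ (N + 1) ↔ fnorm x ≤ (Fintype.card K : ℝ) ^ N := by
  rcases eq_or_ne x 0 with rfl | hx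
  · have hpos (M : ℤ) : (0 : ℝ) < (Fintype.card K : ℝ) ^ M := zpow_pos q_pos M
    simp only [fnorm_zero, hpos, (hpos N).le]
  · rw [fnorm_of_ne_zero hx, zpow_lt_zpow_iff_right₀ one_lt_q, zpow_le_zpow_iff_right₀ one_lt_q,
      Int.lt_add_one_iff]

lemma fnorm_le_zpow_neg_iff {x : FF K} {N : ℤ} :
    fnorm x ≤ (Fintype.card K : ℝ) ^ (-N) ↔ ∀ i < N, coeff i x = 0 := by
  rcases eq_or_ne x 0 with rfl | hx
  · simp only [fnorm_zero, map_zero, implies_true, (zpow_pos q_pos _).le]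
  · rw [fnorm_of_ne_zero hx, zpow_le_zpow_iff_right₀ one_lt_q, neg_le_neg_iff]
    exact HahnSeries.le_order_iff_forall (x := toL x) hx

lemma fnorm_lt_zpow_neg_iff {x : FF K} {N : ℤ} :
    fnorm x < (Fintype.card K : ℝ) ^ (-N) ↔ ∀ i ≤ N, coeff i x = 0 := by
  have h := fnorm_lt_zpow_add_one_iff (x := x) (N := -(N + 1))
  rw [fnorm_le_zpow_neg_iff, show -(N + 1) + 1 = -N by ring] at h
  simpa only [Int.lt_add_one_iff] using h

lemma fnorm_lt_one_iff {x : FF K} : fnorm x < 1 ↔ ∀ i ≤ 0, coeff i x = 0 := by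
  simpa only [neg_zero, zpow_zero] using fnorm_lt_zpow_neg_iff (x := x) (N := 0)

section Vector

variable {ι : Type*} [Fintype ι]

lemma fnorm_le_vnorm (v : ι → FF K) (i : ι) : fnorm (v i) ≤ vnorm v :=
  le_ciSup (f := fun i => fnorm (v i)) (Set.finite_range _).bddAbove i

lemma vnorm_nonneg (v : ι → FF K) : 0 ≤ vnorm v :=
  Real.iSup_nonneg fun i => fnorm_nonneg (v i)

lemma vnorm_lt_iff {v : ι → FF K} {c : ℝ} (hc : 0 < c) : vnorm v < c ↔ ∀ i, fnorm (v i) < c := by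
  refine ⟨fun h i => (fnorm_le_vnorm v i).trans_lt h, fun h => ?_⟩
  rcases isEmpty_or_nonempty ι with _ | _
  · rwa [vnorm, Real.iSup_of_isEmpty]
  · obtain ⟨i, hi⟩ := exists_eq_ciSup_of_finite (f := fun i => fnorm (v i))
    exact hi.symm.trans_lt (h i)

lemma vnorm_lt_zpow_add_one_iff {v : ι → FF K} {N : ℤ} :
    vnorm v < (Fintype.card K : ℝ) ^ (N + 1) ↔ vnorm v ≤ (Fintype.card K : ℝ) ^ N := by
  refine ⟨fun h => Real.iSup_le (fun i => ?_) (zpow_pos q_pos N).le,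
    fun h => h.trans_lt (zpow_lt_zpow_right₀ one_lt_q (lt_add_one N))⟩
  exact fnorm_lt_zpow_add_one_iff.1 ((fnorm_le_vnorm v i).trans_lt h)

lemma fnorm_dotProduct_le (v w : ι → FF K) : fnorm (v ⬝ᵥ w) ≤ vnorm v * vnorm w := by
  refine Finset.sum_induction _ (fnorm · ≤ vnorm v * vnorm w)
    (fun x y hx hy => (fnorm_add_le x y).trans (max_le hx hy)) ?_ fun i _ => ?_
  · rw [fnorm_zero]
    exact mul_nonneg (vnorm_nonneg v) (vnorm_nonneg w)
  · rw [fnorm_mul]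
    exact mul_le_mul (fnorm_le_vnorm v i) (fnorm_le_vnorm w i) (fnorm_nonneg _) (vnorm_nonneg v)

lemma vdist_le (v : ι → FF K) (p : ι → Polynomial K) :
    vdist v ≤ vnorm fun i => v i - polyF (p i) :=
  ciInf_le ⟨0, Set.forall_mem_range.2 fun _ => vnorm_nonneg _⟩ p

lemma exists_mul_vnorm_sub_lt {v : ι → FF K} {a c : ℝ} (ha : 0 ≤ a) (h : a * vdist v < c) :
    ∃ p : ι → Polynomial K, a * vnorm (v - fun i => polyF (p i)) < c := by
  rw [vdist, Real.mul_iInf_of_nonneg ha] at h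
  exact exists_lt_of_ciInf_lt h

end Vector

end Norm

section Polynomials

variable {K : Type*} [Field K] [Fintype K]

lemma fnorm_polyF_lt_pow_iff {P : Polynomial K} {D : ℕ} :
    fnorm (polyF P) < (Fintype.card K : ℝ) ^ D ↔ P ∈ Polynomial.degreeLT K D := by
  rw [← zpow_natCast, ← neg_neg (D : ℤ), fnorm_lt_zpow_neg_iff, Polynomial.mem_degreeLT,
    Polynomial.degree_lt_iff_coeff_zero]
  simp only [coeff_polyF]
  refine ⟨fun h a ha => ?_, fun h i hi => ?_⟩
  · simpa using h (-a) (by lia)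
  · rw [if_pos (by lia), h _ (by lia)]

lemma exists_fnorm_polyF_eq_pow {P : Polynomial K} (hP : 0 < fnorm (polyF P)) :
    ∃ r : ℕ, fnorm (polyF P) = (Fintype.card K : ℝ) ^ r := by
  have hne : polyF P ≠ 0 := fun h => hP.ne' (fnorm_eq_zero.2 h)
  have horder : (toL (polyF P)).order ≤ 0 := by
    by_contra hpos
    have hcoeff : coeff (toL (polyF P)).order (polyF P) = 0 := by rw [coeff_polyF, if_neg hpos]
    exact hne (HahnSeries.coeff_order_eq_zero.1 hcoeff)
  refine ⟨(-(toL (polyF P)).order).toNat, ?_⟩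
  rw [fnorm_of_ne_zero hne, ← zpow_natCast, Int.toNat_of_nonneg (by lia)]

section Vector

variable {ι : Type*} [Fintype ι]

lemma pnorm_lt_pow_iff {y : ι → Polynomial K} {D : ℕ} :
    pnorm y < (Fintype.card K : ℝ) ^ D ↔ ∀ j, y j ∈ Polynomial.degreeLT K D := by
  rw [pnorm, vnorm_lt_iff (pow_pos q_pos D)]
  exact forall_congr' fun _ => fnorm_polyF_lt_pow_iff

lemma exists_pnorm_eq_pow {x : ι → Polynomial K} (hx : 0 < pnorm x) :
    ∃ r : ℕ, pnorm x = (Fintype.card K : ℝ) ^ r := by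
  rcases isEmpty_or_nonempty ι with _ | _
  · exact absurd hx (by rw [pnorm, vnorm, Real.iSup_of_isEmpty]; exact lt_irrefl 0)
  · obtain ⟨j, hj⟩ := exists_eq_ciSup_of_finite (f := fun j => fnorm (polyF (x j)))
    change fnorm (polyF (x j)) = pnorm x at hj
    rw [← hj] at hx ⊢
    exact exists_fnorm_polyF_eq_pow hx

lemma vdist_lt_of_coeff_eq_zero {v : ι → FF K} {N : ℕ}
    (h : ∀ k, ∀ i : Fin N, coeff ((i : ℤ) + 1) (v k) = 0) :
    vdist v < (Fintype.card K : ℝ) ^ (-(N : ℤ)) := by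
  refine (vdist_le v fun k => intPoly (v k)).trans_lt ?_
  rw [vnorm_lt_iff (zpow_pos q_pos _)]
  refine fun k => fnorm_lt_zpow_neg_iff.2 fun i hi => ?_
  rw [map_sub]
  rcases le_or_gt i 0 with hi0 | hi0
  · rw [coeff_polyF_intPoly _ hi0, sub_self]
  · rw [coeff_polyF, if_neg hi0.not_ge, sub_zero]
    have hik := h k ⟨(i - 1).toNat, by lia⟩
    rwa [Fin.val_mk, Int.toNat_of_nonneg (by lia), sub_add_cancel] at hik

end Vector

end Polynomials

section Approximation

variable {K : Type*} [Field K] {m n : ℕ}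

/-- The residue, i.e. the coefficient of `z⁻¹`, of the pairing `y · θ` of a polynomial vector `y`
with `θ`. It vanishes when `θ` is a polynomial vector. -/
def residue (y : Fin n → Polynomial K) (θ : Fin n → FF K) : K :=
  coeff 1 ((fun j => polyF (y j)) ⬝ᵥ θ)

lemma coeff_one_polyF_dotProduct_polyF (y p : Fin n → Polynomial K) :
    coeff 1 ((fun j => polyF (y j)) ⬝ᵥ fun j => polyF (p j)) = 0 := by
  have hpoly : ((fun j => polyF (y j)) ⬝ᵥ fun j => polyF (p j)) = polyF (y ⬝ᵥ p) :=
    (RingHom.map_dotProduct polyRingHom y p).symm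
  rw [hpoly, coeff_polyF, if_neg (by decide)]

variable [Fintype K]

lemma coeff_one_dotProduct_eq_zero {v w : Fin n → FF K}
    (h : vnorm v * vnorm w < (Fintype.card K : ℝ)⁻¹) : coeff 1 (v ⬝ᵥ w) = 0 := by
  rw [← zpow_neg_one] at h
  exact fnorm_lt_zpow_neg_iff.1 ((fnorm_dotProduct_le v w).trans_lt h) 1 le_rfl

/- Khintchine's transference: with `p` and `v` the polynomial parts of `Ax - θ` and `Aᵀy`,
`y · θ = (Aᵀy - v) · x - y · (Ax - θ - p) + (v · x - y · p)`, and the last bracket is a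
polynomial. -/
lemma inv_le_pnorm_mul_vdist {A : Matrix (Fin n) (Fin m) (FF K)} {θ : Fin n → FF K}
    {x : Fin m → Polynomial K} {y : Fin n → Polynomial K} (hres : residue y θ ≠ 0)
    (hM : pnorm x * Mfun A y < (Fintype.card K : ℝ)⁻¹) :
    (Fintype.card K : ℝ)⁻¹ ≤ pnorm y * vdist (A.mulVec (fun k => polyF (x k)) - θ) := by
  by_contra! hlt
  obtain ⟨p, hp⟩ := exists_mul_vnorm_sub_lt (vnorm_nonneg _) hlt
  obtain ⟨v, hv⟩ := exists_mul_vnorm_sub_lt (vnorm_nonneg _) hM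
  set X : Fin m → FF K := fun k => polyF (x k)
  set Y : Fin n → FF K := fun j => polyF (y j)
  set P : Fin n → FF K := fun j => polyF (p j) with hP
  set V : Fin m → FF K := fun k => polyF (v k) with hV
  have hsplit : Y ⬝ᵥ θ =
      X ⬝ᵥ (A.transpose.mulVec Y - V) - Y ⬝ᵥ (A.mulVec X - θ - P) + X ⬝ᵥ V - Y ⬝ᵥ P := by
    have hadj : X ⬝ᵥ A.transpose.mulVec Y = Y ⬝ᵥ A.mulVec X := by
      rw [Matrix.dotProduct_mulVec, Matrix.vecMul_transpose, dotProduct_comm]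
    simp only [dotProduct_sub, hadj]
    ring
  apply hres
  rw [residue, hsplit, map_sub, map_add, map_sub, coeff_one_dotProduct_eq_zero hv,
    coeff_one_dotProduct_eq_zero hp, hV, hP, coeff_one_polyF_dotProduct_polyF,
    coeff_one_polyF_dotProduct_polyF, sub_zero, add_zero, sub_zero]

lemma exists_Mfun_lt (A : Matrix (Fin n) (Fin m) (FF K)) {D N : ℕ} (h : m * N < n * D) :
    ∃ y : Fin n → Polynomial K, y ≠ 0 ∧ (∀ j, y j ∈ Polynomial.degreeLT K D) ∧
      Mfun A y < (Fintype.card K : ℝ) ^ (-(N : ℤ)) := by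
  let fractional (y : Fin n → Polynomial.degreeLT K D) (k : Fin m) (i : Fin N) : K :=
    coeff ((i : ℤ) + 1) (A.transpose.mulVec (fun j => polyF (y j : Polynomial K)) k)
  have : Fintype (Polynomial.degreeLT K D) :=
    Fintype.ofEquiv _ (Polynomial.degreeLTEquiv K D).toEquiv.symm
  have hcard : Fintype.card (Fin m → Fin N → K) <
      Fintype.card (Fin n → Polynomial.degreeLT K D) := by
    have hK : 1 < Fintype.card K := Fintype.one_lt_card
    rw [Fintype.card_fun, Fintype.card_fun, Fintype.card_fun,
      Fintype.card_congr (Polynomial.degreeLTEquiv K D).toEquiv, Fintype.card_fun]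
    simp only [Fintype.card_fin, ← pow_mul]
    exact Nat.pow_lt_pow_right hK (by linarith)
  obtain ⟨y, y', hne, heq⟩ := Fintype.exists_ne_map_eq_of_card_lt fractional hcard
  refine ⟨fun j => y j - y' j, fun h0 => hne (funext fun j => ?_),
    fun j => Submodule.sub_mem _ (y j).2 (y' j).2, ?_⟩
  · exact Subtype.ext (sub_eq_zero.1 (congrFun h0 j))
  refine vdist_lt_of_coeff_eq_zero fun k i => ?_
  have hsub : (fun j => polyF (y j - y' j : Polynomial K)) =
      (fun j => polyF (y j : Polynomial K)) - fun j => polyF (y' j : Polynomial K) :=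
    funext fun j => map_sub polyRingHom (y j : Polynomial K) (y' j)
  rw [hsub, Matrix.mulVec_sub, Pi.sub_apply, map_sub, sub_eq_zero]
  exact congrFun (congrFun heq k) i

end Approximation

section MinimalVectors

variable {K : Type*} [Field K] [Fintype K] {m n : ℕ}

/-- `y` is a minimal vector of degree `< D`: it minimises `M` among the nonzero polynomial vectors
with entries of degree `< D`. Such vectors exist for every `D > 0`; they take the place of the best
approximations related to `Aᵀ`. -/
def IsMinimalVector (A : Matrix (Fin n) (Fin m) (FF K)) (D : ℕ) (y : Fin n → Polynomial K) : Prop :=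
  y ≠ 0 ∧ (∀ j, y j ∈ Polynomial.degreeLT K D) ∧
    ∀ z : Fin n → Polynomial K, z ≠ 0 → (∀ j, z j ∈ Polynomial.degreeLT K D) → Mfun A y ≤ Mfun A z

lemma exists_isMinimalVector (A : Matrix (Fin n) (Fin m) (FF K)) {D : ℕ} (hn : 0 < n)
    (hD : 0 < D) : ∃ y, IsMinimalVector A D y := by
  let S : Set (Fin n → Polynomial K) := {y | y ≠ 0 ∧ ∀ j, y j ∈ Polynomial.degreeLT K D}
  have : Finite (Polynomial.degreeLT K D) :=
    Finite.of_equiv _ (Polynomial.degreeLTEquiv K D).toEquiv.symm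
  have hfinite : S.Finite :=
    (Set.Finite.pi' fun _ => (Polynomial.degreeLT K D : Set (Polynomial K)).toFinite).subset
      fun _ hy => hy.2
  have hnonempty : S.Nonempty := by
    obtain ⟨y, hy, hdeg, -⟩ := exists_Mfun_lt A (N := 0) (Nat.mul_pos hn hD)
    exact ⟨y, hy, hdeg⟩
  obtain ⟨y, hy, hmin⟩ := S.exists_min_image (Mfun A) hfinite hnonempty
  exact ⟨y, hy.1, hy.2, fun z hz hdeg => hmin z ⟨hz, hdeg⟩⟩

lemma IsMinimalVector.mono {A : Matrix (Fin n) (Fin m) (FF K)} {D D' : ℕ}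
    {y z : Fin n → Polynomial K} (hy : IsMinimalVector A D y) (hz : IsMinimalVector A D' z)
    (hD : D ≤ D') (hdeg : ∀ j, z j ∈ Polynomial.degreeLT K D) : IsMinimalVector A D' y :=
  ⟨hy.1, fun j => Polynomial.degreeLT_mono hD (hy.2.1 j),
    fun w hw hwdeg => (hy.2.2 z hz.1 hdeg).trans (hz.2.2 w hw hwdeg)⟩

lemma exists_isMinimalVector_family (A : Matrix (Fin n) (Fin m) (FF K)) {l : ℕ} (hn : 0 < n)
    (hl : 0 < l) :
    ∃ (Y : ℕ → Fin n → Polynomial K) (I : Set ℕ),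
      (∀ i ∈ I, (∀ j, Y i j ∈ Polynomial.degreeLT K ((i + 1) * l)) ∧
        ∃ j, Y i j ∉ Polynomial.degreeLT K (i * l)) ∧
      ∀ k, ∃ i ∈ I, IsMinimalVector A ((k + 1) * l) (Y i) := by
  choose Y hY using fun k : ℕ => exists_isMinimalVector A hn (Nat.mul_pos k.succ_pos hl)
  let I : Set ℕ := {i | ∃ j, Y i j ∉ Polynomial.degreeLT K (i * l)}
  have hzero : 0 ∈ I := by
    obtain ⟨j, hj⟩ := Function.ne_iff.1 (hY 0).1
    refine ⟨j, fun hmem => hj ?_⟩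
    rwa [zero_mul, Polynomial.mem_degreeLT, Nat.cast_zero, Nat.WithBot.lt_zero_iff,
      Polynomial.degree_eq_bot] at hmem
  refine ⟨Y, I, fun i hi => ⟨(hY i).2.1, hi⟩, fun k => ?_⟩
  induction k with
  | zero => exact ⟨0, hzero, hY 0⟩
  | succ k ih =>
    by_cases hk : k + 1 ∈ I
    · exact ⟨k + 1, hk, hY (k + 1)⟩
    · obtain ⟨i, hi, hmin⟩ := ih
      exact ⟨i, hi, hmin.mono (hY (k + 1)) (Nat.mul_le_mul_right l (k + 1).le_succ)
        (not_exists_not.1 hk)⟩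

end MinimalVectors

section Bad

variable {K : Type*} [Field K] [Fintype K] {m n : ℕ}

lemma bad_antitone (A : Matrix (Fin n) (Fin m) (FF K)) : Antitone (Bad A) :=
  fun _ _ h _ hθ => ⟨hθ.1, (ENNReal.ofReal_le_ofReal h).trans hθ.2⟩

lemma IsMinimalVector.inv_pow_le_vdist {A : Matrix (Fin n) (Fin m) (FF K)} {D r : ℕ}
    {y : Fin n → Polynomial K} (hy : IsMinimalVector A D y) {θ : Fin n → FF K}
    (hres : residue y θ ≠ 0) {x : Fin m → Polynomial K} (hx : pnorm x = (Fintype.card K : ℝ) ^ r)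
    (hrD : m * (r + 1) < n * D) :
    (Fintype.card K : ℝ) ^ (-(D : ℤ)) ≤ vdist (A.mulVec (fun k => polyF (x k)) - θ) := by
  have hq := q_pos (K := K)
  have hM : pnorm x * Mfun A y < (Fintype.card K : ℝ)⁻¹ := by
    obtain ⟨z, hz, hdeg, hMz⟩ := exists_Mfun_lt A hrD
    calc pnorm x * Mfun A y
        < (Fintype.card K : ℝ) ^ r * (Fintype.card K : ℝ) ^ (-((r + 1 : ℕ) : ℤ)) := by
          rw [hx]
          exact mul_lt_mul_of_pos_left ((hy.2.2 z hz hdeg).trans_lt hMz) (pow_pos hq r)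
      _ = (Fintype.card K : ℝ)⁻¹ := by
          rw [zpow_neg, zpow_natCast, pow_succ, mul_inv, mul_inv_cancel_left₀ (pow_pos hq r).ne']
  have hynorm : pnorm y ≤ (Fintype.card K : ℝ) ^ ((D : ℤ) - 1) := by
    refine vnorm_lt_zpow_add_one_iff.1 ?_
    rw [sub_add_cancel, zpow_natCast]
    exact pnorm_lt_pow_iff.2 hy.2.1
  have hdist : (0 : ℝ) ≤ vdist (A.mulVec (fun k => polyF (x k)) - θ) :=
    Real.iInf_nonneg fun _ => vnorm_nonneg _
  have htrans := (inv_le_pnorm_mul_vdist hres hM).trans (mul_le_mul_of_nonneg_right hynorm hdist)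
  rwa [sub_eq_add_neg, zpow_add₀ hq.ne', zpow_neg_one, mul_right_comm,
    le_mul_iff_one_le_left (inv_pos.2 hq), ← inv_le_iff_one_le_mul₀' (zpow_pos hq _),
    ← zpow_neg] at htrans

lemma mem_Bad_of_residue_ne_zero {A : Matrix (Fin n) (Fin m) (FF K)} {θ : Fin n → FF K} {l : ℕ}
    (hn : 0 < n) (hl : 0 < l) (hθ : ∀ j, fnorm (θ j) < 1)
    (hres : ∀ k, ∃ y, IsMinimalVector A ((k + 1) * l) y ∧ residue y θ ≠ 0) :
    θ ∈ Bad A ((Fintype.card K : ℝ) ^ (-(l : ℝ) - (m : ℝ) / n)) := by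
  refine ⟨hθ, Filter.le_liminf_of_le (by isBoundedDefault) ?_⟩
  filter_upwards [(eventually_gt_atTop (0 : ℝ)).comap pnorm] with x hx
  refine ENNReal.ofReal_le_ofReal ?_
  obtain ⟨r, hr⟩ := exists_pnorm_eq_pow hx
  set k := m * (r + 1) / (n * l)
  have hk_le : k * (n * l) ≤ m * (r + 1) := Nat.div_mul_le_self _ _
  have hk_lt : m * (r + 1) < n * ((k + 1) * l) := by
    rw [mul_left_comm, ← Nat.div_lt_iff_lt_mul (Nat.mul_pos hn hl)]
    exact k.lt_succ_self
  obtain ⟨y, hy, hyθ⟩ := hres k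
  have hexp : -(l : ℝ) - (m : ℝ) / n ≤ r * ((m : ℝ) / n) + ((-((k + 1) * l : ℕ) : ℤ) : ℝ) := by
    have hn' : (0 : ℝ) < n := Nat.cast_pos.2 hn
    have hk : (k : ℝ) * l ≤ m / n * (r + 1) := by
      rw [div_mul_eq_mul_div, le_div_iff₀ hn']
      have := (Nat.cast_le (α := ℝ)).2 hk_le
      push_cast at this
      linarith
    push_cast
    linarith
  calc (Fintype.card K : ℝ) ^ (-(l : ℝ) - (m : ℝ) / n)
      ≤ (Fintype.card K : ℝ) ^ (r * ((m : ℝ) / n) + ((-((k + 1) * l : ℕ) : ℤ) : ℝ)) :=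
        Real.rpow_le_rpow_of_exponent_le one_le_q hexp
    _ = pnorm x ^ ((m : ℝ) / n) * (Fintype.card K : ℝ) ^ (-((k + 1) * l : ℕ) : ℤ) := by
        rw [Real.rpow_add q_pos, Real.rpow_mul q_pos.le, Real.rpow_natCast, ← hr,
          Real.rpow_intCast]
    _ ≤ _ := mul_le_mul_of_nonneg_left (hy.inv_pow_le_vdist hyθ hr hk_lt)
        (Real.rpow_nonneg hx.le _)

end Bad

section Digits

variable {K : Type*} [Field K] {n : ℕ}

lemma sum_range_mul {M : Type*} [AddCommMonoid M] (n D : ℕ) (f : ℕ → M) :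
    ∑ p ∈ Finset.range (n * D), f p = ∑ j : Fin n, ∑ a ∈ Finset.range D, f (n * a + j) := by
  rw [Finset.sum_comm]
  induction D with
  | zero => simp only [mul_zero, Finset.range_zero, Finset.sum_empty]
  | succ D ih =>
    rw [Nat.mul_succ, Finset.sum_range_add, Finset.sum_range_succ, ih, Finset.sum_range (n := n)]

variable [NeZero n]

/-- The digits of `θ` after the point, in a single sequence: digit `n * a + j` is the coefficient of
`z⁻⁽ᵃ⁺¹⁾` in `θ j`. -/
def digit (θ : Fin n → FF K) (p : ℕ) : K :=
  coeff (1 + (p / n : ℕ)) (θ (Fin.ofNat n p))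

/-- The coefficients of a polynomial vector in a single sequence, matching `digit`: entry
`n * a + j` is the coefficient of `zᵃ` in `y j`. -/
def flatCoeff (y : Fin n → Polynomial K) (p : ℕ) : K :=
  (y (Fin.ofNat n p)).coeff (p / n)

lemma mul_add_div_fin (a : ℕ) (j : Fin n) : (n * a + j) / n = a := by
  rw [Nat.mul_add_div (NeZero.pos n), Nat.div_eq_of_lt j.2, add_zero]

lemma ofNat_mul_add (a : ℕ) (j : Fin n) : Fin.ofNat n (n * a + j) = j :=
  Fin.ext (by rw [Fin.val_ofNat, Nat.mul_add_mod, Nat.mod_eq_of_lt j.2])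

lemma digit_mul_add (θ : Fin n → FF K) (a : ℕ) (j : Fin n) :
    digit θ (n * a + j) = coeff (1 + a) (θ j) := by
  rw [digit, mul_add_div_fin, ofNat_mul_add]

lemma flatCoeff_mul_add (y : Fin n → Polynomial K) (a : ℕ) (j : Fin n) :
    flatCoeff y (n * a + j) = (y j).coeff a := by
  rw [flatCoeff, mul_add_div_fin, ofNat_mul_add]

lemma forall_mem_degreeLT_iff {y : Fin n → Polynomial K} {D : ℕ} :
    (∀ j, y j ∈ Polynomial.degreeLT K D) ↔ ∀ p, n * D ≤ p → flatCoeff y p = 0 := by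
  simp only [Polynomial.mem_degreeLT, Polynomial.degree_lt_iff_coeff_zero]
  refine ⟨fun h p hp => h _ _ ?_, fun h j a ha => ?_⟩
  · rwa [Nat.le_div_iff_mul_le (NeZero.pos n), mul_comm]
  · rw [← flatCoeff_mul_add]
    exact h _ (Nat.le_add_right_of_le (Nat.mul_le_mul_left n ha))

lemma exists_isGreatest_support_flatCoeff {y : Fin n → Polynomial K} {d D : ℕ}
    (hD : ∀ j, y j ∈ Polynomial.degreeLT K D) (hd : ∃ j, y j ∉ Polynomial.degreeLT K d) :
    ∃ p, IsGreatest (Function.support (flatCoeff y)) p ∧ n * d ≤ p ∧ p < n * D := by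
  rw [forall_mem_degreeLT_iff] at hD
  rw [← not_forall, forall_mem_degreeLT_iff] at hd
  push Not at hd
  obtain ⟨p₀, hp₀, hne⟩ := hd
  have hbdd : ∀ p ∈ Function.support (flatCoeff y), p < n * D := fun p hp =>
    not_le.1 (mt (hD p) hp)
  obtain ⟨p, hp⟩ := BddAbove.exists_isGreatest_of_nonempty
    (S := Function.support (flatCoeff y)) ⟨n * D, fun p hp => (hbdd p hp).le⟩ ⟨p₀, hne⟩
  exact ⟨p, hp, hp₀.trans (hp.2 hne), hbdd p hp.1⟩

lemma residue_eq_sum {y : Fin n → Polynomial K} {B : ℕ} (hB : ∀ p, B ≤ p → flatCoeff y p = 0)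
    (θ : Fin n → FF K) :
    residue y θ = ∑ p ∈ Finset.range B, flatCoeff y p * digit θ p := by
  have hBn : B ≤ n * B := Nat.le_mul_of_pos_left B (NeZero.pos n)
  have hdeg : ∀ j, y j ∈ Polynomial.degreeLT K B :=
    forall_mem_degreeLT_iff.2 fun p hp => hB p (hBn.trans hp)
  calc residue y θ
      = ∑ j, ∑ a ∈ Finset.range B, (y j).coeff a * coeff (1 + a) (θ j) := by
        rw [residue, dotProduct, map_sum]
        refine Finset.sum_congr rfl fun j _ => ?_
        have hsupp : (y j).support ⊆ Finset.range B := fun a ha =>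
          Finset.mem_range.2 <| lt_of_not_ge fun hBa => Polynomial.mem_support_iff.1 ha <|
            (Polynomial.degree_lt_iff_coeff_zero _ _).1 (Polynomial.mem_degreeLT.1 (hdeg j)) a hBa
        rw [coeff_polyF_mul]
        exact Polynomial.sum_eq_of_subset _ (fun _ => zero_mul _) hsupp
    _ = ∑ p ∈ Finset.range (n * B), flatCoeff y p * digit θ p := by
        simp only [sum_range_mul, flatCoeff_mul_add, digit_mul_add]
    _ = ∑ p ∈ Finset.range B, flatCoeff y p * digit θ p :=
        (Finset.sum_subset (Finset.range_subset_range.2 hBn) fun p _ hp => by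
          rw [hB p (by simpa using hp), zero_mul]).symm

lemma exists_digit_eq (ω : ℕ → K) :
    ∃ θ : Fin n → FF K, (∀ j i, i ≤ 0 → coeff i (θ j) = 0) ∧ ∀ p, digit θ p = ω p := by
  let θ (j : Fin n) : LaurentSeries K :=
    HahnSeries.ofSuppBddBelow (fun i : ℤ => if 0 < i then ω (n * (i - 1).toNat + j) else 0)
      ⟨0, fun i hi => by
        by_contra h
        simp [not_lt.2 (not_le.1 h).le] at hi⟩
  refine ⟨θ, fun j i hi => if_neg hi.not_gt, fun p => ?_⟩
  change (if 0 < 1 + ((p / n : ℕ) : ℤ) then _ else (0 : K)) = ω p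
  rw [if_pos (by positivity), add_sub_cancel_left, Int.toNat_natCast, Fin.val_ofNat,
    Nat.div_add_mod]

end Digits

section ForwardSubstitution

variable {R : Type*} [DivisionRing R]

/-- The solution of the infinite lower triangular system `∑ s ≤ p, a p s * ω s = b p` with
nonzero diagonal. -/
def forwardSubst (a : ℕ → ℕ → R) (b : ℕ → R) (p : ℕ) : R :=
  (a p p)⁻¹ * (b p - ∑ s : Fin p, a p s * forwardSubst a b s)
termination_by p
decreasing_by exact s.2

lemma sum_mul_forwardSubst {a : ℕ → ℕ → R} (b : ℕ → R) {p : ℕ} (hp : a p p ≠ 0) :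
    ∑ s ∈ Finset.range (p + 1), a p s * forwardSubst a b s = b p := by
  rw [Finset.sum_range_succ, forwardSubst, mul_inv_cancel_left₀ hp, Finset.sum_range,
    add_sub_cancel]

end ForwardSubstitution

section Dimension

lemma abs_ofDigits_sub_le_rpow {b : ℕ} (hb : 1 < b) {d d' : ℕ → Fin b} {s : ℝ}
    (h : ∀ k : ℕ, k < s → d k = d' k) : |Real.ofDigits d - Real.ofDigits d'| ≤ (b : ℝ) ^ (-s) := by
  have hb' : (1 : ℝ) < b := Nat.one_lt_cast.2 hb
  calc |Real.ofDigits d - Real.ofDigits d'|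
      ≤ ((b : ℝ) ^ ⌈s⌉₊)⁻¹ :=
        Real.abs_ofDigits_sub_ofDigits_le fun k hk => h k (Nat.lt_ceil.1 hk)
    _ = (b : ℝ) ^ (-(⌈s⌉₊ : ℝ)) := by
        rw [Real.rpow_neg (zero_le_one.trans hb'.le), Real.rpow_natCast]
    _ ≤ (b : ℝ) ^ (-s) := Real.rpow_le_rpow_of_exponent_le hb'.le (neg_le_neg (Nat.le_ceil s))

section MetricSpace

variable {X : Type*} [MetricSpace X] {G : Set X} {b : ℕ} {digits : X → ℕ → Fin b} {r : ℝ} {C : ℕ}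

lemma abs_ofDigits_sub_le_mul_dist_rpow (hb : 1 < b) (hr : 0 < r) {x y : X} (hxy : x ≠ y)
    (hclose : ∀ N k : ℕ, dist x y ≤ ((b : ℝ) ^ N)⁻¹ → k + C < r * N → digits x k = digits y k) :
    |Real.ofDigits (digits x) - Real.ofDigits (digits y)| ≤ (b : ℝ) ^ (C + r) * dist x y ^ r := by
  have hb' : (1 : ℝ) < b := Nat.one_lt_cast.2 hb
  have hb₀ : (0 : ℝ) < b := zero_lt_one.trans hb'
  rcases le_or_gt (dist x y) 1 with hle | hgt
  · obtain ⟨N, hN, hN'⟩ := exists_nat_pow_near_of_lt_one (dist_pos.2 hxy) hle (inv_pos.2 hb₀)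
      (inv_lt_one_of_one_lt₀ hb')
    rw [inv_pow] at hN hN'
    calc |Real.ofDigits (digits x) - Real.ofDigits (digits y)|
        ≤ (b : ℝ) ^ (-(r * N - C)) :=
          abs_ofDigits_sub_le_rpow hb fun k hk => hclose N k hN' (lt_sub_iff_add_lt.1 hk)
      _ = (b : ℝ) ^ (C + r) * (((b : ℝ) ^ (N + 1))⁻¹) ^ r := by
          rw [← Real.rpow_natCast, ← Real.rpow_neg hb₀.le, ← Real.rpow_mul hb₀.le,
            ← Real.rpow_add hb₀]
          push_cast
          ring_nf
      _ ≤ (b : ℝ) ^ (C + r) * dist x y ^ r := by gcongr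
  · calc |Real.ofDigits (digits x) - Real.ofDigits (digits y)|
        ≤ 1 := abs_sub_le_of_le_of_le (Real.ofDigits_nonneg _) (Real.ofDigits_le_one _)
          (Real.ofDigits_nonneg _) (Real.ofDigits_le_one _) |>.trans_eq (sub_zero 1)
      _ ≤ (b : ℝ) ^ (C + r) * dist x y ^ r :=
        one_le_mul_of_one_le_of_one_le (Real.one_le_rpow hb'.le (by positivity))
          (Real.one_le_rpow hgt.le hr.le)

lemma ofReal_le_dimH_of_digits (hb : 1 < b) (hsurj : Set.SurjOn digits G Set.univ)
    (hclose : ∀ x ∈ G, ∀ y ∈ G, ∀ N k : ℕ, dist x y ≤ ((b : ℝ) ^ N)⁻¹ → k + C < r * N →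
      digits x k = digits y k) :
    ENNReal.ofReal r ≤ dimH G := by
  rcases le_or_gt r 0 with hr | hr
  · rw [ENNReal.ofReal_of_nonpos hr]
    exact zero_le
  have hb₀ : (0 : ℝ) ≤ b := b.cast_nonneg
  have hholder : HolderOnWith (Real.toNNReal ((b : ℝ) ^ (C + r))) (Real.toNNReal r)
      (fun x => Real.ofDigits (digits x)) G := by
    intro x hx y hy
    rcases eq_or_ne x y with rfl | hxy
    · simp only [edist_self, zero_le]
    rw [edist_dist, edist_dist, Real.coe_toNNReal _ hr.le,
      ENNReal.ofReal_rpow_of_pos (dist_pos.2 hxy), ← ENNReal.ofReal,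
      ← ENNReal.ofReal_mul (Real.rpow_nonneg hb₀ _)]
    exact ENNReal.ofReal_le_ofReal <|
      abs_ofDigits_sub_le_mul_dist_rpow hb hr hxy (hclose x hx y hy)
  have himage : (1 : ℝ≥0∞) ≤ dimH ((fun x => Real.ofDigits (digits x)) '' G) := by
    have hIcc : dimH (Set.Icc (0 : ℝ) 1) = 1 := by
      rw [Real.dimH_of_nonempty_interior (by simp [interior_Icc]), Module.finrank_self,
        Nat.cast_one]
    exact hIcc.symm.trans_le (dimH_mono ((Real.ofDigits_SurjOn hb).comp hsurj))
  have hr' : (0 : ℝ≥0) < Real.toNNReal r := Real.toNNReal_pos.2 hr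
  have hdim := himage.trans (hholder.dimH_image_le hr')
  rwa [ENNReal.le_div_iff_mul_le (Or.inl (by simpa using hr)) (Or.inl ENNReal.coe_ne_top),
    one_mul] at hdim

end MetricSpace

lemma le_count_notMem_add {T : Set ℕ} {w : ℕ} (hT : Set.InjOn (· / w) T) (N : ℕ) :
    N ≤ Nat.count (· ∉ T) N + (N / w + 1) := by
  have hmem : ((Finset.range N).filter (· ∈ T)).card ≤ N / w + 1 := by
    rw [← Finset.card_range (N / w + 1)]
    refine Finset.card_le_card_of_injOn (· / w) (fun p hp => ?_) (hT.mono fun p hp => ?_)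
    · exact Finset.mem_coe.2 <| Finset.mem_range_succ_iff.2 <|
        Nat.div_le_div_right (Finset.mem_range.1 (Finset.mem_filter.1 hp).1).le
    · exact (Finset.mem_filter.1 hp).2
  have hsplit := Finset.card_filter_add_card_filter_not (s := Finset.range N) (· ∈ T)
  rw [Finset.card_range] at hsplit
  rw [Nat.count_eq_card_filter_range]
  lia

lemma infinite_compl_of_injOn_div {T : Set ℕ} {w : ℕ} (hw : 1 < w) (hT : Set.InjOn (· / w) T) :
    {p | p ∉ T}.Infinite := by
  intro hfinite
  obtain ⟨c, hc⟩ : ∃ c, ∀ N, Nat.count (· ∉ T) N ≤ c := ⟨_, Nat.count_le_card hfinite⟩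
  have hle := (le_count_notMem_add hT (2 * (c + 2))).trans (Nat.add_le_add_right (hc _) _)
  have hdiv : 2 * (c + 2) / w ≤ c + 2 :=
    (Nat.div_le_div_left hw two_pos).trans_eq (Nat.mul_div_cancel_left _ two_pos)
  lia

end Dimension

section FreeDigits

variable {K : Type*} [Field K] [Fintype K] {n : ℕ} [NeZero n]

lemma digit_eq_of_dist_le {θ θ' : Fin n → FF K} {N p : ℕ}
    (h : dist θ θ' ≤ ((Fintype.card K : ℝ) ^ N)⁻¹) (hp : p < n * (N - 1)) :
    digit θ p = digit θ' p := by
  have hpN : p / n < N - 1 := Nat.div_lt_of_lt_mul hp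
  have hj : fnorm (θ (Fin.ofNat n p) - θ' (Fin.ofNat n p)) ≤ (Fintype.card K : ℝ) ^ (-(N : ℤ)) := by
    rw [zpow_neg, zpow_natCast]
    exact (dist_le_pi_dist θ θ' _).trans h
  have hcoeff := fnorm_le_zpow_neg_iff.1 hj (1 + (p / n : ℕ)) (by lia)
  rwa [map_sub, sub_eq_zero] at hcoeff

lemma le_dimH_of_free_digits {l : ℕ} (hw : 1 < n * l) {T : Set ℕ}
    (hT : Set.InjOn (· / (n * l)) T) {G : Set (Fin n → FF K)}
    (hG : ∀ e : ℕ → K, ∃ θ ∈ G, ∀ p ∉ T, digit θ p = e p) :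
    ENNReal.ofReal ((n : ℝ) - 1 / l) ≤ dimH G := by
  have hinf := infinite_compl_of_injOn_div hw hT
  refine ofReal_le_dimH_of_digits (C := n + 1) (b := Fintype.card K) (G := G) Fintype.one_lt_card
    (digits := fun θ k => Fintype.equivFin K (digit θ (Nat.nth (· ∉ T) k))) ?_ ?_
  · intro u _
    obtain ⟨θ, hθ, hdigit⟩ := hG fun p => (Fintype.equivFin K).symm (u (Nat.count (· ∉ T) p))
    refine ⟨θ, hθ, funext fun k => ?_⟩
    beta_reduce
    rw [hdigit _ (Nat.nth_mem_of_infinite hinf k), Equiv.apply_symm_apply,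
      Nat.count_nth_of_infinite hinf]
  · intro θ _ θ' _ N k hdist hk
    refine congrArg _ (digit_eq_of_dist_le hdist (Nat.nth_lt_of_lt_count ?_))
    have hcount : n * (N - 1) ≤ Nat.count (· ∉ T) (n * (N - 1)) + (N / l + 1) :=
      (le_count_notMem_add hT _).trans <| by
        rw [Nat.mul_div_mul_left _ _ (NeZero.pos n)]
        gcongr
        exact N.sub_le 1
    have hkN : k + n + 1 + N / l < n * N := by
      have hdiv : ((N / l : ℕ) : ℝ) ≤ N / l := Nat.cast_div_le
      have hsplit : ((n : ℝ) - 1 / l) * N = n * N - N / l := by ring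
      have : ((k + n + 1 + N / l : ℕ) : ℝ) < (n * N : ℕ) := by
        push_cast at hk ⊢
        linarith
      exact_mod_cast this
    rw [Nat.mul_sub_one] at hcount ⊢
    lia

lemma exists_residue_eq_one {l : ℕ} {Y : ℕ → Fin n → Polynomial K} {T : Set ℕ}
    (hT : ∀ p ∈ T, IsGreatest (Function.support (flatCoeff (Y (p / (n * l))))) p) (e : ℕ → K) :
    ∃ θ : Fin n → FF K, (∀ j, fnorm (θ j) < 1) ∧ (∀ p ∈ T, residue (Y (p / (n * l))) θ = 1) ∧
      ∀ p ∉ T, digit θ p = e p := by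
  let a (p : ℕ) : ℕ → K := if p ∈ T then flatCoeff (Y (p / (n * l))) else Pi.single p 1
  let b (p : ℕ) : K := if p ∈ T then 1 else e p
  have ha (p : ℕ) : a p p ≠ 0 := by
    by_cases hp : p ∈ T
    · simp only [a, if_pos hp]
      exact (hT p hp).1
    · simp only [a, if_neg hp, Pi.single_eq_same, ne_eq, one_ne_zero, not_false_eq_true]
  obtain ⟨θ, hθ, hdigit⟩ := exists_digit_eq (n := n) (forwardSubst a b)
  have hsolve (p : ℕ) : ∑ s ∈ Finset.range (p + 1), a p s * digit θ s = b p := by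
    simp only [hdigit, sum_mul_forwardSubst b (ha p)]
  refine ⟨θ, fun j => fnorm_lt_one_iff.2 (hθ j), fun p hp => ?_, fun p hp => ?_⟩
  · rw [residue_eq_sum (B := p + 1) fun s hs => ?_]
    · simpa only [a, b, if_pos hp] using hsolve p
    · exact Function.notMem_support.1 fun hmem => ((hT p hp).2 hmem).not_gt hs
  · have h := hsolve p
    simp only [a, b, if_neg hp, Pi.single_apply, ite_mul, one_mul, zero_mul, Finset.sum_ite_eq',
      Finset.self_mem_range_succ, if_true] at h
    exact h

lemma le_dimH_residue_ne_zero {l : ℕ} (hl : 0 < l) {Y : ℕ → Fin n → Polynomial K} {I : Set ℕ}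
    (hI : ∀ i ∈ I, (∀ j, Y i j ∈ Polynomial.degreeLT K ((i + 1) * l)) ∧
      ∃ j, Y i j ∉ Polynomial.degreeLT K (i * l)) :
    ENNReal.ofReal ((n : ℝ) - 1 / l) ≤
      dimH {θ : Fin n → FF K | (∀ j, fnorm (θ j) < 1) ∧ ∀ i ∈ I, residue (Y i) θ ≠ 0} := by
  rcases le_or_gt (n * l) 1 with hw | hw
  · obtain ⟨rfl, rfl⟩ : n = 1 ∧ l = 1 :=
      mul_eq_one.1 (hw.antisymm (Nat.mul_pos (NeZero.pos n) hl))
    simp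
  let T : Set ℕ := {p | p / (n * l) ∈ I ∧
    IsGreatest (Function.support (flatCoeff (Y (p / (n * l))))) p}
  have hT : Set.InjOn (· / (n * l)) T := by
    intro p hp p' hp' (heq : p / (n * l) = p' / (n * l))
    exact hp.2.unique (heq ▸ hp'.2)
  refine le_dimH_of_free_digits hw hT fun e => ?_
  obtain ⟨θ, hθ, hres, hdigit⟩ := exists_residue_eq_one (fun p (hp : p ∈ T) => hp.2) e
  refine ⟨θ, ⟨hθ, fun i hi => ?_⟩, hdigit⟩
  obtain ⟨p, hp, hle, hlt⟩ := exists_isGreatest_support_flatCoeff (hI i hi).1 (hI i hi).2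
  have hdiv : p / (n * l) = i :=
    Nat.div_eq_of_lt_le (by rwa [mul_left_comm]) (by rwa [mul_left_comm])
  have hpT : p ∈ T := by simpa only [T, Set.mem_ofPred_eq, hdiv] using ⟨hi, hp⟩
  rw [← hdiv, hres p hpT]
  exact one_ne_zero

end FreeDigits

lemma ofReal_le_dimH_Bad {K : Type*} [Field K] [Fintype K] {m n l : ℕ} (hn : 0 < n) (hl : 0 < l)
    (A : Matrix (Fin n) (Fin m) (FF K)) :
    ENNReal.ofReal ((n : ℝ) - 1 / l) ≤
      dimH (Bad A ((Fintype.card K : ℝ) ^ (-(l : ℝ) - (m : ℝ) / n))) := by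
  have : NeZero n := ⟨hn.ne'⟩
  obtain ⟨Y, I, hI, hmin⟩ := exists_isMinimalVector_family A hn hl
  refine (le_dimH_residue_ne_zero hl hI).trans (dimH_mono fun θ hθ => ?_)
  refine mem_Bad_of_residue_ne_zero hn hl hθ.1 fun k => ?_
  obtain ⟨i, hi, hY⟩ := hmin k
  exact ⟨Y i, hY, hθ.2 i hi⟩

section Modulus

lemma continuousOn_div_log_one_add_inv (c : ℝ) :
    ContinuousOn (fun x : ℝ => c / Real.log (1 + x⁻¹)) (Set.Ici 0) := by
  intro x hx
  rcases (Set.mem_Ici.1 hx).eq_or_lt with rfl | hx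
  · rw [← continuousWithinAt_Ioi_iff_Ici, ContinuousWithinAt, inv_zero, add_zero, Real.log_one,
      div_zero]
    exact (Real.tendsto_log_atTop.comp <|
      tendsto_atTop_add_const_left _ 1 tendsto_inv_nhdsGT_zero).const_div_atTop c
  · have hlt : 1 < 1 + x⁻¹ := lt_add_of_pos_right 1 (inv_pos.2 hx)
    exact (continuousAt_const.div ((continuousAt_const.add (continuousAt_inv₀ hx.ne')).log
      (zero_lt_one.trans hlt).ne') (Real.log_pos hlt).ne').continuousWithinAt

lemma div_add_one_le_div_log {q ε t c : ℝ} (hq : 2 ≤ q) (ht : 0 ≤ t) (hc : 0 ≤ c) (hε : 0 < ε)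
    (h : q ^ (-t) ≤ ε) : c / (t + 1) ≤ c * Real.log q / Real.log (1 + ε⁻¹) := by
  have hq₀ : 0 < q := two_pos.trans_le hq
  have hinv : ε⁻¹ ≤ q ^ t :=
    inv_le_of_inv_le₀ (Real.rpow_pos_of_pos hq₀ t) (by rwa [← Real.rpow_neg hq₀.le])
  have hone : 1 ≤ q ^ t := Real.one_le_rpow (one_le_two.trans hq) ht
  have hlog : Real.log (1 + ε⁻¹) ≤ (t + 1) * Real.log q := by
    rw [← Real.log_rpow hq₀]
    refine Real.log_le_log (by positivity) ?_
    calc 1 + ε⁻¹ ≤ q ^ t * 2 := by linarith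
      _ ≤ q ^ (t + 1) := by
        rw [Real.rpow_add_one hq₀.ne']
        gcongr
  rw [div_le_div_iff₀ (by positivity) (Real.log_pos (lt_add_of_pos_right 1 (inv_pos.2 hε)))]
  calc c * Real.log (1 + ε⁻¹) ≤ c * ((t + 1) * Real.log q) := by gcongr
    _ = c * Real.log q * (t + 1) := by ring

end Modulus

lemma ofReal_sub_div_log_le_dimH_Bad {K : Type*} [Field K] [Fintype K] {m n : ℕ} (hn : 0 < n)
    (A : Matrix (Fin n) (Fin m) (FF K)) {ε : ℝ} (hε : 0 < ε) :
    ENNReal.ofReal (n - (3 * n + m) * Real.log (Fintype.card K) / Real.log (1 + ε⁻¹)) ≤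
      dimH (Bad A ε) := by
  have hq : (2 : ℝ) ≤ Fintype.card K := Nat.ofNat_le_cast.2 Fintype.one_lt_card
  have hn' : (1 : ℝ) ≤ n := Nat.one_le_cast.2 hn
  have hmn' : (m : ℝ) / n ≤ m := div_le_self m.cast_nonneg hn'
  set L : ℝ := -Real.logb (Fintype.card K) ε - m / n
  set l := ⌊L⌋₊
  have hlt : L < l + 1 := Nat.lt_floor_add_one L
  have herror := div_add_one_le_div_log (c := 3 * n + m) (t := l + 1 + m / n) hq (by positivity)
    (by positivity) hε ((Real.le_logb_iff_rpow_le one_lt_q hε).1 (by linarith))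
  rcases Nat.eq_zero_or_pos l with hl | hl
  · have hle : (n : ℝ) ≤ (3 * n + m) / (l + 1 + m / n + 1) := by
      rw [hl, Nat.cast_zero, le_div_iff₀ (by positivity)]
      have : (n : ℝ) * (m / n) = m := mul_div_cancel₀ _ (by positivity)
      linarith
    rw [ENNReal.ofReal_of_nonpos (by linarith)]
    exact zero_le
  · have hl' : (1 : ℝ) ≤ l := Nat.one_le_cast.2 hl
    have hle : 1 / (l : ℝ) ≤ (3 * n + m) / (l + 1 + m / n + 1) := by
      rw [div_le_div_iff₀ (by positivity) (by positivity)]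
      nlinarith
    have hlL : (l : ℝ) ≤ L := (Nat.le_floor_iff' hl.ne').1 le_rfl
    calc ENNReal.ofReal _ ≤ ENNReal.ofReal (n - 1 / l) := ENNReal.ofReal_le_ofReal (by linarith)
      _ ≤ dimH (Bad A ((Fintype.card K : ℝ) ^ (-(l : ℝ) - (m : ℝ) / n))) :=
        ofReal_le_dimH_Bad hn hl A
      _ ≤ dimH (Bad A ε) := dimH_mono <| bad_antitone A <|
        (Real.logb_le_iff_le_rpow one_lt_q hε).1 (by linarith)

end FPSDA

theorem dimH_Bad_lower_general {K : Type*} [Field K] [Fintype K] {m n : ℕ} (hn : 0 < n)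
    (A : Matrix (Fin n) (Fin m) (FF K)) :
    (∀ l : ℕ, 0 < l →
      ENNReal.ofReal ((n : ℝ) - 1 / (l : ℝ)) ≤
        dimH (Bad A ((Fintype.card K : ℝ) ^ (-(l : ℝ) - (m : ℝ) / (n : ℝ))))) ∧
    ∃ f : ℝ → ℝ, ContinuousOn f (Set.Ici 0) ∧ f 0 = 0 ∧ (∀ x : ℝ, 0 ≤ x → 0 ≤ f x) ∧
      ∀ ε : ℝ, 0 < ε → ENNReal.ofReal ((n : ℝ) - f ε) ≤ dimH (Bad A ε) := by
  refine ⟨fun l hl => ofReal_le_dimH_Bad hn hl A,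
    fun ε => (3 * n + m) * Real.log (Fintype.card K) / Real.log (1 + ε⁻¹),
    continuousOn_div_log_one_add_inv _, by simp, fun ε hε => ?_,
    fun ε hε => ofReal_sub_div_log_le_dimH_Bad hn A hε⟩
  have hlog : 0 ≤ Real.log (1 + ε⁻¹) :=
    Real.log_nonneg (le_add_of_nonneg_right (inv_nonneg.2 hε))
  positivity

/-- For any non-degenerate matrix `A ∈ M_{n,m}(𝔽_q((z⁻¹)))`: for every integer `l ≥ 2` the
set `Bad^ε(A)` with `ε = q^{-(2l+2) - m/n}` has Hausdorff dimension at least `n - 1/l`;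
in particular there is a continuous function `f : ℝ₊ → ℝ₊` with `f 0 = 0` such that
`dim_H Bad^ε(A) ≥ n - f ε` for every `0 < ε ≤ q^{-m/n - 6}`. -/
theorem dimH_Bad_lower {K : Type*} [Field K] [Fintype K] {m n : ℕ}
    (hm : 0 < m) (hn : 0 < n)
    (A : Matrix (Fin n) (Fin m) (FF K)) (hA : Nondegenerate A) :
    (∀ l : ℕ, 2 ≤ l →
      ENNReal.ofReal ((n : ℝ) - 1 / (l : ℝ)) ≤
        dimH (Bad A ((Fintype.card K : ℝ) ^ (-(2 * (l : ℝ) + 2) - (m : ℝ) / (n : ℝ))))) ∧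
    ∃ f : ℝ → ℝ, ContinuousOn f (Set.Ici 0) ∧ f 0 = 0 ∧ (∀ x : ℝ, 0 ≤ x → 0 ≤ f x) ∧
      ∀ ε : ℝ, 0 < ε → ε ≤ (Fintype.card K : ℝ) ^ (-(m : ℝ) / (n : ℝ) - 6) →
        ENNReal.ofReal ((n : ℝ) - f ε) ≤ dimH (Bad A ε) := by
  obtain ⟨hdim, f, hf, hf₀, hf_nonneg, hfdim⟩ := dimH_Bad_lower_general hn A
  refine ⟨fun l hl => (hdim l (two_pos.trans_le hl)).trans (dimH_mono (bad_antitone A ?_)),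
    f, hf, hf₀, hf_nonneg, fun ε hε _ => hfdim ε hε⟩
  exact Real.rpow_le_rpow_of_exponent_le one_le_q (by linarith [l.cast_nonneg (α := ℝ)])
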